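/- arXiv:1408.4709 — 2 statements merged into one kernel-verified Lean document; each statement's English description precedes it below -/
import Mathlib

section
/- Let G be a finite group, H a normal subgroup, and ρ = ρ₁ ⊗ ρ₂ a tensor product representation of G over ℂ, where ρ₁ and ρ₂ are (projective) representations of G such that ρ₂(h) = 1 for all h ∈ H, the restriction of ρ₁ to H is an irreducible representation of H, and ρ₂ is irreducible. Then ρ is an irreducible representation of G. -/
open TensorProduct

/-- Burnside's theorem on matrix algebras. -/
theorem burnside_aux {V : Type*} [AddCommGroup V] [Module ℂ V] [FiniteDimensional ℂ V]
    (A : Subalgebra ℂ (Module.End ℂ V)) [IsSimpleModule A V] (T : Module.End ℂ V) : T ∈ A := by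
  have hs := IsSimpleModule.algebraMap_end_bijective_of_isAlgClosed (A := A) (V := V) ℂ
  obtain ⟨s, hsp⟩ := Module.Finite.fg_top (R := ℂ) (M := V)
  let f : Module.End (Module.End A V) V :=
    { toFun := T
      map_add' := T.map_add
      map_smul' := by
        intro c v
        obtain ⟨z, rfl⟩ := hs.2 c
        have h1 : ∀ x : V, (algebraMap ℂ (Module.End A V) z) • x = z • x := fun x => rfl
        simp [h1] }
  obtain ⟨r, hr⟩ := jacobson_density f s
  have : T = r.1 := by
    apply LinearMap.ext_on hsp
    intro m hm
    exact hr m hm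
  rw [this]
  exact r.2

theorem exists_dual_one_aux {M : Type*} [AddCommGroup M] [Module ℂ M] (x : M) (hx : x ≠ 0) :
    ∃ f : M →ₗ[ℂ] ℂ, f x = 1 := by
  obtain ⟨f, hf⟩ := LinearMap.exists_leftInverse_of_injective
    (LinearMap.toSpanSingleton ℂ M x) (LinearMap.ker_toSpanSingleton ℂ hx)
  exact ⟨f, by simpa using congr($hf 1)⟩

theorem exists_functional_aux {M₁ M₂ : Type*} [AddCommGroup M₁] [Module ℂ M₁] [AddCommGroup M₂]
    [Module ℂ M₂] (w : M₁ ⊗[ℂ] M₂) (hw : w ≠ 0) :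
    ∃ f : M₁ →ₗ[ℂ] ℂ, TensorProduct.lid ℂ M₂ (f.rTensor M₂ w) ≠ 0 := by
  classical
  by_contra! hcon
  apply hw
  clear hw
  let b := Module.Basis.ofVectorSpace ℂ M₁
  have key : ∀ i, TensorProduct.equivFinsuppOfBasisLeft b w i
      = TensorProduct.lid ℂ M₂ ((b.coord i).rTensor M₂ w) := by
    intro i
    clear hcon
    induction w with
    | zero => simp
    | tmul x y => simp
    | add x y hx hy => simp_all
  apply (TensorProduct.equivFinsuppOfBasisLeft b).injective
  ext i
  rw [key, hcon]
  simp

/-- Let `G` be a finite group, `H` a normal subgroup and `ρ = ρ₁ ⊗ ρ₂` a tensor product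
representation of `G` over `ℂ`, where `ρ₂(h) = 1` for all `h ∈ H`, the restriction of `ρ₁`
to `H` is an irreducible representation of `H`, and `ρ₂` is irreducible.  Then `ρ` is
irreducible. -/
theorem stmt_3 {G : Type*} [Group G] [Fintype G] (H : Subgroup G) [H.Normal]
    {M₁ M₂ : Type*} [AddCommGroup M₁] [Module ℂ M₁] [AddCommGroup M₂] [Module ℂ M₂]
    (ρ₁ : G → M₁ →ₗ[ℂ] M₁) (ρ₂ : G → M₂ →ₗ[ℂ] M₂)
    -- `ρ := g ↦ ρ₁ g ⊗ ρ₂ g` is a genuine linear representation of `G`: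
    (hρ_one : TensorProduct.map (ρ₁ 1) (ρ₂ 1) = LinearMap.id)
    (hρ_mul : ∀ g g' : G,
      TensorProduct.map (ρ₁ (g * g')) (ρ₂ (g * g'))
        = (TensorProduct.map (ρ₁ g) (ρ₂ g)) ∘ₗ (TensorProduct.map (ρ₁ g') (ρ₂ g')))
    -- `ρ₂` is trivial on `H`:
    (hρ₂H : ∀ h ∈ H, ρ₂ h = LinearMap.id)
    -- the restriction of `ρ₁` to `H` is an irreducible representation of `H`:
    (hρ₁H_mul : ∀ h ∈ H, ∀ h' ∈ H, ρ₁ (h * h') = ρ₁ h ∘ₗ ρ₁ h')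
    (hρ₁H_irr : (⊥ : Submodule ℂ M₁) ≠ ⊤ ∧
      ∀ W : Submodule ℂ M₁, (∀ h ∈ H, ∀ w ∈ W, ρ₁ h w ∈ W) → W = ⊥ ∨ W = ⊤)
    -- `ρ₂` is irreducible:
    (hρ₂_irr : (⊥ : Submodule ℂ M₂) ≠ ⊤ ∧
      ∀ W : Submodule ℂ M₂, (∀ g : G, ∀ w ∈ W, ρ₂ g w ∈ W) → W = ⊥ ∨ W = ⊤) :
    -- then `ρ` is irreducible:
    (⊥ : Submodule ℂ (M₁ ⊗[ℂ] M₂)) ≠ ⊤ ∧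
      ∀ W : Submodule ℂ (M₁ ⊗[ℂ] M₂),
        (∀ g : G, ∀ w ∈ W, TensorProduct.map (ρ₁ g) (ρ₂ g) w ∈ W) → W = ⊥ ∨ W = ⊤ := by
  obtain ⟨hne₁, hirr₁⟩ := hρ₁H_irr
  obtain ⟨hne₂, hirr₂⟩ := hρ₂_irr
  have hn₁ : Nontrivial M₁ := (Submodule.nontrivial_iff ℂ).1 ⟨⟨_, _, hne₁⟩⟩
  have hn₂ : Nontrivial M₂ := (Submodule.nontrivial_iff ℂ).1 ⟨⟨_, _, hne₂⟩⟩
  have hn : Nontrivial (M₁ ⊗[ℂ] M₂) := inferInstance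
  refine ⟨bot_ne_top, fun W hW => ?_⟩
  -- `ρ₁ 1 = id`
  have h1 : ρ₁ 1 = LinearMap.id := by
    ext x
    obtain ⟨y, hy⟩ := exists_ne (0 : M₂)
    have h := congr($hρ_one (x ⊗ₜ y))
    rw [hρ₂H 1 H.one_mem] at h
    simp only [TensorProduct.map_tmul, LinearMap.id_apply] at h
    by_contra hx
    have hx' : ρ₁ 1 x - x ≠ 0 := sub_ne_zero.2 hx
    have h0 : (ρ₁ 1 x - x) ⊗ₜ[ℂ] y = 0 := by rw [TensorProduct.sub_tmul, h, sub_self]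
    obtain ⟨f, hf⟩ := exists_dual_one_aux _ hx'
    have h2 := congr(TensorProduct.lid ℂ M₂ (f.rTensor M₂ $h0))
    rw [LinearMap.rTensor_tmul, hf] at h2
    exact hy (by simpa using h2)
  -- finite-dimensionality
  have hfd : FiniteDimensional ℂ M₁ := by
    obtain ⟨v, hv⟩ := exists_ne (0 : M₁)
    let S : Set M₁ := Set.range (fun h : H => ρ₁ h v)
    have hS : S.Finite := Set.finite_range _
    have hvS : v ∈ Submodule.span ℂ S :=
      Submodule.subset_span ⟨1, by simp [h1]⟩
    rcases hirr₁ (Submodule.span ℂ S) (by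
      intro h hh w hw
      have : Submodule.span ℂ S ≤ (Submodule.span ℂ S).comap (ρ₁ h) := by
        rw [Submodule.span_le]
        rintro _ ⟨k, rfl⟩
        refine Submodule.subset_span ⟨⟨h, hh⟩ * k, ?_⟩
        simp [hρ₁H_mul h hh k k.2]
      exact this hw) with h | h
    · rw [h] at hvS
      exact absurd hvS hv
    · exact ⟨h ▸ Submodule.fg_span hS⟩
  let A : Subalgebra ℂ (Module.End ℂ M₁) := Algebra.adjoin ℂ (ρ₁ '' (H : Set G))
  have hsimple : IsSimpleModule A M₁ := by
    have : Nontrivial (Submodule A M₁) := (Submodule.nontrivial_iff A).2 hn₁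
    refine (isSimpleModule_iff _ _).2 ⟨fun U => ?_⟩
    rcases hirr₁ (U.restrictScalars ℂ) (fun h hh w hw =>
      U.smul_mem (⟨ρ₁ h, Algebra.subset_adjoin ⟨h, hh, rfl⟩⟩ : A) hw) with h | h
    · left; simpa using h
    · right; simpa using h
  have hstab : ∀ T : Module.End ℂ M₁, ∀ w ∈ W, LinearMap.rTensor M₂ T w ∈ W := by
    intro T
    have hT : T ∈ Algebra.adjoin ℂ (ρ₁ '' (H : Set G)) := burnside_aux A T
    induction hT using Algebra.adjoin_induction with
    | mem x hx =>
      obtain ⟨h, hh, rfl⟩ := hx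
      intro w hw
      have := hW h w hw
      rwa [hρ₂H h hh] at this
    | algebraMap r =>
      intro w hw
      have : LinearMap.rTensor M₂ (algebraMap ℂ (Module.End ℂ M₁) r) = r • LinearMap.id := by
        rw [Algebra.algebraMap_eq_smul_one, LinearMap.rTensor_smul, Module.End.one_eq_id,
          LinearMap.rTensor_id]
      rw [this]
      exact W.smul_mem r hw
    | add x y _ _ hx hy =>
      intro w hw
      rw [LinearMap.rTensor_add]
      exact W.add_mem (hx w hw) (hy w hw)
    | mul x y _ _ hx hy =>
      intro w hw
      rw [LinearMap.rTensor_mul]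
      exact hx _ (hy w hw)
  -- extraction of pure tensors
  have hext : ∀ w ∈ W, ∀ f : M₁ →ₗ[ℂ] ℂ, ∀ m : M₁,
      m ⊗ₜ[ℂ] (TensorProduct.lid ℂ M₂ (f.rTensor M₂ w)) ∈ W := by
    intro w hw f m
    have h := hstab (f.smulRight m) w hw
    convert h using 1
    clear h hw
    induction w with
    | zero => simp
    | tmul x y => simp [TensorProduct.smul_tmul]
    | add x y hx hy => simp only [map_add, TensorProduct.tmul_add, hx, hy]
  let K : Submodule ℂ M₂ := ⨅ m : M₁, W.comap (TensorProduct.mk ℂ M₁ M₂ m)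
  have hK : ∀ y, y ∈ K ↔ ∀ m : M₁, m ⊗ₜ[ℂ] y ∈ W := by
    intro y; simp [K, Submodule.mem_iInf]
  have hKinv : ∀ g : G, ∀ y ∈ K, ρ₂ g y ∈ K := by
    intro g y hy
    rw [hK] at hy ⊢
    have hg : ∃ x, ρ₁ g x ≠ 0 := by
      by_contra! hcon
      have hz : ρ₁ g = 0 := LinearMap.ext hcon
      have h := hρ_mul g g⁻¹
      rw [mul_inv_cancel, hρ_one, hz, TensorProduct.map_zero_left, LinearMap.zero_comp] at h
      obtain ⟨t, ht⟩ := exists_ne (0 : M₁ ⊗[ℂ] M₂)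
      exact ht congr($h t)
    obtain ⟨x, hx⟩ := hg
    obtain ⟨f, hf⟩ := exists_dual_one_aux _ hx
    intro m
    have h := hext _ (hW g _ (hy x)) f m
    simpa [hf] using h
  rcases hirr₂ K hKinv with h | h
  · left
    rw [Submodule.eq_bot_iff]
    intro w hw
    by_contra hw0
    obtain ⟨f, hf⟩ := exists_functional_aux w hw0
    have : TensorProduct.lid ℂ M₂ (f.rTensor M₂ w) ∈ K := (hK _).2 (hext w hw f)
    rw [h] at this
    exact hf this
  · right
    rw [eq_top_iff, ← TensorProduct.span_tmul_eq_top, Submodule.span_le]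
    rintro _ ⟨x, y, rfl⟩
    exact (hK y).1 (h ▸ Submodule.mem_top) x
end

section
/- Let G be a finite group, N ⊴ G, χ an irreducible character of N, and I = I_G(χ) its inertia group. If ψ is an irreducible constituent of the induced character χ↑^I, then ψ↑^G is an irreducible character of G. Moreover, the same conclusion holds with I replaced by any subgroup H of G containing I_G(χ) (for irreducible constituents ψ of χ↑^H lying over χ). -/
/-- The standard inner product `⟨f, g⟩ = (1/|G|) Σ_x f(x)·conj(g(x))` on functions
`G → ℂ`. -/
noncomputable def classInner (G : Type*) [Fintype G] (f g : G → ℂ) : ℂ :=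
  (Fintype.card G : ℂ)⁻¹ * ∑ x : G, f x * (starRingEnd ℂ) (g x)

/-- The character of `G` induced from a function `f` on a subgroup `H ≤ G`:
`(f↑^G)(g) = (1/|H|) Σ_{x ∈ G, x⁻¹gx ∈ H} f(x⁻¹gx)`. -/
noncomputable def indChar {G : Type*} [Group G] [Fintype G] (H : Subgroup G)
    [DecidablePred (· ∈ H)] (f : ↥H → ℂ) : G → ℂ :=
  fun g => (Nat.card H : ℂ)⁻¹ *
    ∑ x : G, if h : x⁻¹ * g * x ∈ H then f ⟨x⁻¹ * g * x, h⟩ else 0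

/-- `f` is the character of an irreducible complex representation of `G`. -/
def IsIrrChar (G : Type) [Group G] (f : G → ℂ) : Prop :=
  ∃ V : FDRep ℂ G, CategoryTheory.Simple V ∧ V.character = f

open CategoryTheory

lemma trace_pi_aux {ι W : Type*} [Fintype ι] [DecidableEq ι] [AddCommGroup W] [Module ℂ W]
    [FiniteDimensional ℂ W] (f : (ι → W) →ₗ[ℂ] (ι → W)) :
    LinearMap.trace ℂ _ f = ∑ i, LinearMap.trace ℂ W
      (LinearMap.proj i ∘ₗ f ∘ₗ LinearMap.single ℂ (fun _ => W) i) := by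
  have h : f = ∑ i, (f ∘ₗ LinearMap.single ℂ (fun _ => W) i) ∘ₗ LinearMap.proj i := by
    refine LinearMap.ext fun v => ?_
    simp only [LinearMap.sum_apply, LinearMap.comp_apply, LinearMap.proj_apply]
    rw [← map_sum]
    congr 1
    ext j
    simp [Finset.sum_apply, Pi.single_apply]
  conv_lhs => rw [h]
  rw [map_sum]
  refine Finset.sum_congr rfl fun i _ => ?_
  rw [LinearMap.trace_comp_comm']

open scoped ComplexOrder in
lemma char_inv_aux {G V : Type*} [Group G] [Fintype G] [AddCommGroup V] [Module ℂ V]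
    [FiniteDimensional ℂ V] (ρ : Representation ℂ G V) (g : G) :
    (starRingEnd ℂ) (ρ.character g) = ρ.character g⁻¹ := by
  classical
  let b := Module.finBasis ℂ V
  let M : G → Matrix _ _ ℂ := fun g => LinearMap.toMatrix b b (ρ g)
  have hM : ∀ g h, M (g * h) = M g * M h := fun g h => by
    simp [M, LinearMap.toMatrix_mul]
  have hM1 : M 1 = 1 := by simp [M, LinearMap.toMatrix_one]
  have ht : ∀ g, ρ.character g = (M g).trace := fun g => by
    simp [Representation.character, M, LinearMap.trace_eq_matrix_trace ℂ b]
  let Q := ∑ x : G, (M x).conjTranspose * M x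
  have hQ : Q.PosDef := by
    have : Q = 1 + ∑ x ∈ Finset.univ.erase (1 : G), (M x).conjTranspose * M x := by
      have := Finset.add_sum_erase Finset.univ (fun x => (M x).conjTranspose * M x)
        (Finset.mem_univ (1 : G))
      simp only [Q]
      rw [← this]
      simp [hM1]
    rw [this]
    refine Matrix.PosDef.one.add_posSemidef ?_
    exact Matrix.posSemidef_sum _ fun x _ => Matrix.posSemidef_conjTranspose_mul_self _
  have hinv : ∀ g, (M g).conjTranspose * Q * M g = Q := fun g => by
    simp only [Q, Finset.mul_sum, Finset.sum_mul]
    refine Fintype.sum_equiv (Equiv.mulRight g) _ _ fun x => ?_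
    simp [hM, Matrix.conjTranspose_mul, Matrix.mul_assoc]
  have hu := hQ.isUnit
  have hd := (Matrix.isUnit_iff_isUnit_det _).1 hu
  have h1 : (M g).conjTranspose * Q = Q * M g⁻¹ := by
    have := congrArg (· * M g⁻¹) (hinv g)
    simpa [Matrix.mul_assoc, ← hM, hM1] using this
  have h2 : (M g).conjTranspose = Q * M g⁻¹ * Q⁻¹ := by
    rw [← h1, Matrix.mul_nonsing_inv_cancel_right _ _ hd]
  rw [ht, ht]
  have h3 := Matrix.trace_conjTranspose (M g)
  rw [h2, Matrix.trace_mul_comm, ← Matrix.mul_assoc, Matrix.nonsing_inv_mul _ hd,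
    Matrix.one_mul] at h3
  exact h3.symm

lemma simple_aux {G : Type} [Group G] (V : FDRep ℂ G) [Simple V] (S : Submodule ℂ V)
    (hS : ∀ g, ∀ v ∈ S, V.ρ g v ∈ S) : S = ⊥ ∨ S = ⊤ := by
  let σ : Representation ℂ G S :=
    { toFun := fun g => (V.ρ g).restrict (hS g)
      map_one' := by ext; simp
      map_mul' := fun a b => by ext; simp }
  let i : FDRep.of σ ⟶ V := ⟨FGModuleCat.ofHom S.subtype, fun g => by ext; rfl⟩
  have hi : Mono i := by
    apply ConcreteCategory.mono_of_injective
    exact Subtype.val_injective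
  by_cases h0 : i = 0
  · left
    rw [eq_bot_iff]
    intro v hv
    have : (i.hom.hom.hom : S →ₗ[ℂ] V) ⟨v, hv⟩ = 0 := by rw [h0]; rfl
    exact this
  · right
    have := isIso_of_mono_of_nonzero h0
    let e := FDRep.isoToLinearEquiv (asIso i)
    rw [eq_top_iff]
    intro v _
    obtain ⟨w, hw⟩ := e.surjective v
    have : S.subtype w = v := hw
    rw [← this]
    exact w.2

/-- Key lemma. -/
lemma key_aux {G : Type} [Group G] [Fintype G] (N : Subgroup G) (hN : N.Normal)
    (X : FDRep ℂ N) [Simple X] (H : Subgroup G) (hNH : N ≤ H)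
    (hstab : ∀ g : G,
      (∀ n : ↥N, X.character ⟨g * ↑n * g⁻¹, hN.conj_mem ↑n n.2 g⟩ = X.character n) → g ∈ H)
    (W : FDRep ℂ H) [Simple W]
    (f : X →ₗ[ℂ] W) (hf : ∀ n x, f (X.ρ n x) = W.ρ ⟨n, hNH n.2⟩ (f x)) (hf0 : f ≠ 0)
    (p : W →ₗ[ℂ] X) (hp : ∀ (n : N) w, p (W.ρ ⟨n, hNH n.2⟩ w) = X.ρ n (p w)) (hp0 : p ≠ 0)
    (z : G) (T : W →ₗ[ℂ] W)
    (hT : ∀ (n : N) w, T (W.ρ ⟨n, hNH n.2⟩ w) =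
      W.ρ ⟨z * n * z⁻¹, hNH (hN.conj_mem n n.2 z)⟩ (T w)) (hT0 : T ≠ 0) : z ∈ H := by
  -- commutation
  have hcomm : ∀ (h : H) (n : N) (w : W), W.ρ h (W.ρ ⟨n, hNH n.2⟩ w) =
      W.ρ ⟨h * n * (h : G)⁻¹, hNH (hN.conj_mem n n.2 h)⟩ (W.ρ h w) := by
    intro h n w
    rw [← Module.End.mul_apply, ← Module.End.mul_apply, ← map_mul, ← map_mul]
    congr 2
    ext
    simp
  -- some translate of `f` is not killed by `T`
  obtain ⟨h, hh⟩ : ∃ h : H, T ∘ₗ W.ρ h ∘ₗ f ≠ 0 := by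
    by_contra! hcon
    let S : Submodule ℂ W := ⨆ h : H, LinearMap.range (W.ρ h ∘ₗ f)
    have hS : ∀ g, ∀ v ∈ S, W.ρ g v ∈ S := by
      intro g
      change S ≤ S.comap (W.ρ g)
      refine iSup_le fun h => ?_
      rintro _ ⟨x, rfl⟩
      refine Submodule.mem_iSup_of_mem (g * h) ⟨x, ?_⟩
      simp
    rcases simple_aux W S hS with h | h
    · apply hf0
      ext x
      have : f x ∈ S := Submodule.mem_iSup_of_mem 1 ⟨x, by simp⟩
      rw [h] at this
      simpa using this
    · apply hT0
      have : S ≤ LinearMap.ker T := by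
        refine iSup_le fun h => ?_
        rintro _ ⟨x, rfl⟩
        exact LinearMap.congr_fun (hcon h) x
      rw [h] at this
      exact LinearMap.ker_eq_top.1 (top_le_iff.1 this)
  obtain ⟨h', hh'⟩ : ∃ h' : H, p ∘ₗ W.ρ h' ∘ₗ (T ∘ₗ W.ρ h ∘ₗ f) ≠ 0 := by
    by_contra! hcon
    let S : Submodule ℂ W := ⨅ h : H, LinearMap.ker (p ∘ₗ W.ρ h)
    have hS : ∀ g, ∀ v ∈ S, W.ρ g v ∈ S := by
      intro g v hv
      simp only [S, Submodule.mem_iInf, LinearMap.mem_ker, LinearMap.comp_apply] at hv ⊢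
      intro h
      simpa using hv (h * g)
    rcases simple_aux W S hS with hb | hb
    · apply hh
      ext x
      have : (T ∘ₗ W.ρ h ∘ₗ f) x ∈ S := by
        simp only [S, Submodule.mem_iInf, LinearMap.mem_ker]
        intro i
        exact LinearMap.congr_fun (hcon i) x
      rw [hb] at this
      simpa using this
    · apply hp0
      ext w
      have : w ∈ S := by rw [hb]; trivial
      simp only [S, Submodule.mem_iInf, LinearMap.mem_ker, LinearMap.comp_apply] at this
      simpa using this 1
  let c : G := h' * z * h
  suffices hc : c ∈ H by
    have : z = (h' : G)⁻¹ * c * (h : G)⁻¹ := by simp [c]; group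
    rw [this]
    exact H.mul_mem (H.mul_mem (H.inv_mem h'.2) hc) (H.inv_mem h.2)
  let F : X →ₗ[ℂ] X := p ∘ₗ W.ρ h' ∘ₗ (T ∘ₗ W.ρ h ∘ₗ f)
  have hF : ∀ (n : N) x, F (X.ρ n x) = X.ρ ⟨c * n * c⁻¹, hN.conj_mem n n.2 c⟩ (F x) := by
    intro n x
    have e1 := hf n x
    have e2 := hcomm h n (f x)
    have e3 := hT ⟨h * n * (h : G)⁻¹, hN.conj_mem n n.2 h⟩ (W.ρ h (f x))
    have e4 := hcomm h' ⟨z * (h * n * (h : G)⁻¹) * z⁻¹,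
      hN.conj_mem _ (hN.conj_mem n n.2 h) z⟩ (T (W.ρ h (f x)))
    have e5 := hp ⟨h' * (z * (h * n * (h : G)⁻¹) * z⁻¹) * (h' : G)⁻¹,
      hN.conj_mem _ (hN.conj_mem _ (hN.conj_mem n n.2 h) z) h'⟩ (W.ρ h' (T (W.ρ h (f x))))
    simp only [F, LinearMap.comp_apply]
    rw [e1, e2, e3, e4, e5]
    congr 3
    simp [c, mul_assoc]
  apply hstab
  -- `F` is bijective
  have hinj : LinearMap.ker F = ⊥ := by
    refine (simple_aux X (LinearMap.ker F) ?_).resolve_right ?_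
    · intro n x hx
      rw [LinearMap.mem_ker] at hx ⊢
      rw [hF, hx, map_zero]
    · intro ht
      exact hh' (LinearMap.ker_eq_top.1 ht)
  let e : X ≃ₗ[ℂ] X := LinearEquiv.ofInjectiveEndo F (LinearMap.ker_eq_bot.1 hinj)
  intro n
  have : X.ρ ⟨c * n * c⁻¹, hN.conj_mem n n.2 c⟩ = e.conj (X.ρ n) := by
    ext x
    obtain ⟨y, rfl⟩ := e.surjective x
    rw [LinearEquiv.conj_apply_apply, LinearEquiv.symm_apply_apply]
    exact (hF n y).symm
  rw [FDRep.character, FDRep.character, this, LinearMap.trace_conj']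

lemma coind_char_aux {G : Type} [Group G] [Fintype G] (H : Subgroup G) [DecidablePred (· ∈ H)]
    {W : Type} [AddCommGroup W] [Module ℂ W] [FiniteDimensional ℂ W]
    (σ : Representation ℂ H W) (g : G) :
    LinearMap.trace ℂ _ (Representation.coind H.subtype σ g) = indChar H σ.character g := by
  classical
  let R : (G → W) →ₗ[ℂ] (G → W) := LinearMap.funLeft ℂ W (· * g)
  let P : (G → W) →ₗ[ℂ] (G → W) := (Nat.card H : ℂ)⁻¹ •
    ∑ h : H, LinearMap.pi fun x => σ h⁻¹ ∘ₗ LinearMap.proj ((h : G) * x)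
  have hP : ∀ f x, P f x = (Nat.card H : ℂ)⁻¹ • ∑ h : H, σ h⁻¹ (f (h * x)) := by
    intro f x
    simp [P, LinearMap.sum_apply, Finset.sum_apply]
  have hPm : ∀ f, P f ∈ Representation.coindV H.subtype σ := by
    intro f
    rw [Representation.mem_coindV]
    intro k x
    rw [hP, hP, map_smul, map_sum]
    congr 1
    refine Fintype.sum_equiv (Equiv.mulRight k) _ _ fun h => ?_
    rw [← Module.End.mul_apply, ← map_mul]
    simp [mul_assoc]
  let P' : (G → W) →ₗ[ℂ] Representation.coindV H.subtype σ := P.codRestrict _ hPm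
  have hcard : (Nat.card H : ℂ) ≠ 0 := Nat.cast_ne_zero.2 Nat.card_pos.ne'
  have hPid : ∀ f : Representation.coindV H.subtype σ, P' f = f := by
    intro f
    ext x
    change P f x = _
    rw [hP]
    have : ∀ h : H, σ h⁻¹ ((f : G → W) (h * x)) = (f : G → W) x := by
      intro h
      have := (Representation.mem_coindV _ _ _).1 f.2 h x
      rw [Subgroup.subtype_apply] at this
      rw [this, ← Module.End.mul_apply, ← map_mul]
      simp
    simp only [this, Finset.sum_const, Finset.card_univ, ← Nat.card_eq_fintype_card]
    rw [← Nat.cast_smul_eq_nsmul ℂ, smul_smul, inv_mul_cancel₀ hcard, one_smul]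
  have h1 : (Representation.coind H.subtype σ g : _ →ₗ[ℂ] _) =
      P' ∘ₗ (R ∘ₗ (Representation.coindV H.subtype σ).subtype) := by
    refine LinearMap.ext fun f => ?_
    exact (hPid (Representation.coind H.subtype σ g f)).symm
  rw [h1, LinearMap.trace_comp_comm', trace_pi_aux, indChar, Finset.mul_sum]
  refine Fintype.sum_equiv (Equiv.inv G) _ _ fun x => ?_
  have h2 : (LinearMap.proj x ∘ₗ ((R ∘ₗ (Representation.coindV H.subtype σ).subtype) ∘ₗ P') ∘ₗ
      LinearMap.single ℂ (fun _ => W) x : W →ₗ[ℂ] W) =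
      (Nat.card H : ℂ)⁻¹ • if h : x * g * x⁻¹ ∈ H then σ ⟨x * g * x⁻¹, h⟩ else 0 := by
    ext w
    change P (Pi.single x w) (x * g) = _
    rw [hP, LinearMap.smul_apply]
    congr 1
    split_ifs with h
    · rw [Finset.sum_eq_single (⟨x * g * x⁻¹, h⟩⁻¹ : H)]
      · simp [mul_assoc]
      · intro b _ hb
        rw [Pi.single_eq_of_ne, map_zero]
        contrapose! hb
        ext
        rw [← mul_assoc] at hb
        simp only [InvMemClass.coe_inv]
        rw [eq_inv_iff_mul_eq_one, ← mul_assoc, ← mul_assoc, hb, mul_inv_cancel]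
      · simp
    · rw [LinearMap.zero_apply]
      refine Finset.sum_eq_zero fun b _ => ?_
      rw [Pi.single_eq_of_ne, map_zero]
      contrapose! h
      have : x * g * x⁻¹ = (b : G)⁻¹ := by
        rw [eq_inv_iff_mul_eq_one, mul_eq_one_comm, ← mul_assoc, h, mul_inv_cancel]
      rw [this]
      exact H.inv_mem b.2
  rw [h2, map_smul, smul_eq_mul]
  congr 1
  simp only [Equiv.inv_apply, inv_inv]
  split_ifs
  · rfl
  · simp

lemma sum_ite_mem_aux {G : Type} [Group G] [Fintype G] (H : Subgroup G) [DecidablePred (· ∈ H)]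
    {W : Type} [AddCommGroup W] [Module ℂ W] (a : W) :
    (∑ z : G, if z ∈ H then a else 0) = (Nat.card H : ℂ) • a := by
  rw [← Finset.sum_filter, Finset.sum_const, Nat.cast_smul_eq_nsmul, Nat.card_eq_fintype_card,
    Fintype.card_subtype]

lemma coind_end_aux {G : Type} [Group G] [Fintype G] (N : Subgroup G) (hN : N.Normal)
    (H : Subgroup G) [DecidablePred (· ∈ H)] (hNH : N ≤ H)
    {W : Type} [AddCommGroup W] [Module ℂ W]
    (σ : Representation ℂ H W)
    (hA : ∀ z ∉ H, ∀ T : W →ₗ[ℂ] W, (∀ (n : N) w, T (σ ⟨n, hNH n.2⟩ w) =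
      σ ⟨z * n * z⁻¹, hNH (hN.conj_mem n n.2 z)⟩ (T w)) → T = 0)
    (hB : ∀ T : W →ₗ[ℂ] W, (∀ h w, T (σ h w) = σ h (T w)) → ∃ c : ℂ, ∀ w, T w = c • w)
    (L : Representation.coindV H.subtype σ →ₗ[ℂ] Representation.coindV H.subtype σ)
    (hL : ∀ g f, L (Representation.coind H.subtype σ g f) =
      Representation.coind H.subtype σ g (L f)) :
    ∃ c : ℂ, ∀ f, L f = c • f := by
  have hcard : (Nat.card H : ℂ) ≠ 0 := Nat.cast_ne_zero.2 Nat.card_pos.ne'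
  have hmem : ∀ (f : Representation.coindV H.subtype σ) (h : H) (x : G),
      (f : G → W) (h * x) = σ h ((f : G → W) x) :=
    fun f h x => (Representation.mem_coindV _ _ _).1 f.2 h x
  have hact : ∀ (f : Representation.coindV H.subtype σ) (g x : G),
      (Representation.coind H.subtype σ g f : G → W) x = (f : G → W) (x * g) :=
    fun f g x => rfl
  let δ0 : G → W →ₗ[ℂ] (G → W) := fun z => LinearMap.pi fun x =>
    if h : x * z⁻¹ ∈ H then σ ⟨x * z⁻¹, h⟩ else 0
  have hδ0 : ∀ z w, δ0 z w ∈ Representation.coindV H.subtype σ := by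
    intro z w
    rw [Representation.mem_coindV]
    intro k x
    simp only [δ0, LinearMap.pi_apply, Subgroup.subtype_apply]
    by_cases h : x * z⁻¹ ∈ H
    · have h' : (k : G) * x * z⁻¹ ∈ H := by
        rw [mul_assoc]; exact H.mul_mem k.2 h
      rw [dif_pos h, dif_pos h', ← Module.End.mul_apply, ← map_mul]
      congr 2
      ext
      simp [mul_assoc]
    · have h' : ¬ (k : G) * x * z⁻¹ ∈ H := by
        rwa [mul_assoc, H.mul_mem_cancel_left k.2]
      rw [dif_neg h, dif_neg h']
      simp
  let δ : G → W →ₗ[ℂ] Representation.coindV H.subtype σ := fun z => (δ0 z).codRestrict _ (hδ0 z)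
  have hδp : ∀ z w x (h : x * z⁻¹ ∈ H), (δ z w : G → W) x = σ ⟨x * z⁻¹, h⟩ w := by
    intro z w x h
    change δ0 z w x = _
    simp only [δ0, LinearMap.pi_apply]
    rw [dif_pos h]
  have hδn : ∀ z w x, x * z⁻¹ ∉ H → (δ z w : G → W) x = 0 := by
    intro z w x h
    change δ0 z w x = _
    simp only [δ0, LinearMap.pi_apply]
    rw [dif_neg h, LinearMap.zero_apply]
  let ev : Representation.coindV H.subtype σ →ₗ[ℂ] W :=
    LinearMap.proj 1 ∘ₗ (Representation.coindV H.subtype σ).subtype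
  have hev : ∀ f, ev f = (f : G → W) 1 := fun f => rfl
  let T : G → W →ₗ[ℂ] W := fun z => ev ∘ₗ L ∘ₗ δ z
  have hTdef : ∀ z w, T z w = (L (δ z w) : G → W) 1 := fun z w => rfl
  have hTc : ∀ (z : G) (m k : H), (z⁻¹ * m * z : G) = k → ∀ w, T z (σ m w) = σ k (T z w) := by
    intro z m k hk w
    have : δ z (σ m w) = Representation.coind H.subtype σ k (δ z w) := by
      ext x
      rw [hact]
      have hx : x * k * z⁻¹ = x * z⁻¹ * m := by rw [← hk]; group
      by_cases h : x * z⁻¹ ∈ H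
      · have h' : x * k * z⁻¹ ∈ H := by rw [hx]; exact H.mul_mem h m.2
        rw [hδp _ _ _ h, hδp _ _ _ h', ← Module.End.mul_apply, ← map_mul]
        congr 2
        ext
        simp [hx]
      · have h' : ¬ x * k * z⁻¹ ∈ H := by rwa [hx, H.mul_mem_cancel_right m.2]
        rw [hδn _ _ _ h, hδn _ _ _ h']
    rw [hTdef, hTdef, this, hL, hact, one_mul, ← hmem, mul_one]
  have hT0 : ∀ z ∉ H, T z = 0 := by
    intro z hz
    refine hA z⁻¹ (fun h => hz (by simpa using H.inv_mem h)) _ fun n w => ?_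
    exact hTc z _ _ (by simp) w
  obtain ⟨c, hc⟩ := hB (T 1) fun h w => hTc 1 h h (by simp) w
  have hsum : ∀ f : Representation.coindV H.subtype σ,
      ∑ z : G, δ z ((f : G → W) z) = (Nat.card H : ℂ) • f := by
    intro f
    ext x
    rw [Submodule.coe_sum, Finset.sum_apply, Submodule.coe_smul, Pi.smul_apply,
      ← sum_ite_mem_aux H]
    refine Fintype.sum_equiv ((Equiv.inv G).trans (Equiv.mulLeft x)) _ _ fun z => ?_
    simp only [Equiv.trans_apply, Equiv.inv_apply, Equiv.coe_mulLeft]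
    split_ifs with h
    · rw [hδp _ _ _ h, ← hmem]
      simp
    · rw [hδn _ _ _ h]
  have hone : ∀ f, (L f : G → W) 1 = c • (f : G → W) 1 := by
    intro f
    have h1 : (Nat.card H : ℂ) • (L f : G → W) 1 = (Nat.card H : ℂ) • c • (f : G → W) 1 := by
      rw [← sum_ite_mem_aux H (c • (f : G → W) 1)]
      have : (Nat.card H : ℂ) • (L f : G → W) 1 = ev (L ((Nat.card H : ℂ) • f)) := by
        rw [map_smul, map_smul, hev]
      rw [this, ← hsum, map_sum, map_sum]
      refine Finset.sum_congr rfl fun z _ => ?_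
      change T z _ = _
      split_ifs with h
      · rw [← hc]
        have : δ z ((f : G → W) z) = δ 1 ((f : G → W) 1) := by
          have hfz : (f : G → W) z = σ ⟨z, h⟩ ((f : G → W) 1) := by
            rw [← hmem, mul_one]
          rw [hfz]
          ext x
          by_cases hx : x ∈ H
          · have hx1 : x * z⁻¹ ∈ H := H.mul_mem hx (H.inv_mem h)
            have hx2 : x * 1⁻¹ ∈ H := by simpa using hx
            rw [hδp _ _ _ hx1, hδp _ _ _ hx2, ← Module.End.mul_apply, ← map_mul]
            congr 2
            ext
            simp
          · have hx1 : x * z⁻¹ ∉ H := by rwa [H.mul_mem_cancel_right (H.inv_mem h)]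
            have hx2 : x * 1⁻¹ ∉ H := by simpa using hx
            rw [hδn _ _ _ hx1, hδn _ _ _ hx2]
        rw [hTdef, hTdef, this]
      · rw [hT0 z h, LinearMap.zero_apply]
    exact smul_right_injective W hcard h1
  refine ⟨c, fun f => ?_⟩
  ext x
  have h1 := hone (Representation.coind H.subtype σ x f)
  rw [hL, hact, hact, one_mul] at h1
  exact h1

lemma schur_aux {G : Type} [Group G] (V : FDRep ℂ G) [Simple V] (T : V →ₗ[ℂ] V)
    (hT : ∀ g v, T (V.ρ g v) = V.ρ g (T v)) : ∃ c : ℂ, ∀ v, T v = c • v := by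
  let i : V ⟶ V := ⟨FGModuleCat.ofHom T, fun g => by ext v; exact hT g v⟩
  have h1 := finrank_endomorphism_simple_eq_one ℂ V
  obtain ⟨c, hc⟩ := (finrank_eq_one_iff_of_nonzero' (𝟙 V) (id_nonzero V)).1 h1 i
  refine ⟨c, fun v => ?_⟩
  have : (i.hom.hom.hom : V →ₗ[ℂ] V) v = c • v := by rw [← hc]; rfl
  exact this

/-- **Clifford correspondence.**  Let `G` be a finite group, `N ⊴ G`, `χ` an irreducible
character of `N`, and `H` any subgroup of `G` containing the inertia group `I_G(χ)`
(in particular `H = I_G(χ)` itself).  If `ψ` is an irreducible character of `H` lying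
over `χ` (e.g. an irreducible constituent of `χ↑^H` lying over `χ`), then `ψ↑^G` is an
irreducible character of `G`. -/
theorem stmt_18 {G : Type} [Group G] [Fintype G]
    (N : Subgroup G) [DecidablePred (· ∈ N)] (hN : N.Normal)
    (χ : ↥N → ℂ) (hχ : IsIrrChar ↥N χ)
    (H : Subgroup G) [DecidablePred (· ∈ H)] (hNH : N ≤ H)
    -- `H` contains the inertia group `I_G(χ)`:
    (hstab : ∀ g : G,
      (∀ n : ↥N, χ ⟨g * ↑n * g⁻¹, hN.conj_mem ↑n n.2 g⟩ = χ n) → g ∈ H)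
    (ψ : ↥H → ℂ) (hψ : IsIrrChar ↥H ψ)
    -- `ψ` lies over `χ`, i.e. `⟨ψ↓_N, χ⟩_N ≠ 0`:
    (hover : classInner ↥N (fun n : ↥N => ψ ⟨↑n, hNH n.2⟩) χ ≠ 0) :
    IsIrrChar G (indChar H ψ) := by
  obtain ⟨X, hX, rfl⟩ := hχ
  obtain ⟨W, hW, rfl⟩ := hψ
  have := invertibleOfNonzero (NeZero.ne (Nat.card N : ℂ))
  let ρX : Representation ℂ N X := X.ρ
  let ρW : Representation ℂ N W := (W.ρ : Representation ℂ H W).comp (Subgroup.inclusion hNH)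
  have hsum : ∑ n : N, ρW.character n * ρX.character n⁻¹ ≠ 0 := by
    intro h0
    apply hover
    rw [classInner]
    refine mul_eq_zero_of_right _ ?_
    rw [← h0]
    refine Finset.sum_congr rfl fun n _ => ?_
    rw [← char_inv_aux ρX]
    rfl
  have hsum' : ∑ n : N, ρX.character n * ρW.character n⁻¹ ≠ 0 := by
    intro h0
    apply hsum
    rw [← h0]
    refine Fintype.sum_equiv (Equiv.inv N) _ _ fun n => ?_
    simp [mul_comm]
  have hcard : (Nat.card N : ℂ)⁻¹ ≠ 0 := inv_ne_zero (NeZero.ne _)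
  obtain ⟨f, hf0⟩ : ∃ f : Representation.IntertwiningMap ρX ρW, f ≠ 0 := by
    by_contra! hcon
    have : Subsingleton (Representation.IntertwiningMap ρX ρW) :=
      ⟨fun a b => by rw [hcon a, hcon b]⟩
    have h := Representation.card_inv_mul_sum_char_mul_char_eq_finrank ρX ρW
    rw [Module.finrank_zero_of_subsingleton, Nat.cast_zero] at h
    exact mul_ne_zero hcard hsum h
  obtain ⟨p, hp0⟩ : ∃ p : Representation.IntertwiningMap ρW ρX, p ≠ 0 := by
    by_contra! hcon
    have : Subsingleton (Representation.IntertwiningMap ρW ρX) :=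
      ⟨fun a b => by rw [hcon a, hcon b]⟩
    have h := Representation.card_inv_mul_sum_char_mul_char_eq_finrank ρW ρX
    rw [Module.finrank_zero_of_subsingleton, Nat.cast_zero] at h
    exact mul_ne_zero hcard hsum' h
  have hA : ∀ z ∉ H, ∀ T : W →ₗ[ℂ] W, (∀ (n : N) w, T (W.ρ ⟨n, hNH n.2⟩ w) =
      W.ρ ⟨z * n * z⁻¹, hNH (hN.conj_mem n n.2 z)⟩ (T w)) → T = 0 := by
    intro z hz T hT
    by_contra hT0
    refine hz (key_aux N hN X H hNH hstab W f.toLinearMap (fun n x => Representation.IntertwiningMap.isIntertwining _ _ f n x) ?_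
      p.toLinearMap (fun n x => Representation.IntertwiningMap.isIntertwining _ _ p n x) ?_ z T hT hT0)
    · exact fun h => hf0 (Representation.IntertwiningMap.ext h)
    · exact fun h => hp0 (Representation.IntertwiningMap.ext h)
  let σ : Representation ℂ H W := W.ρ
  let U : FDRep ℂ G := FDRep.of (Representation.coind H.subtype σ)
  have hchar : U.character = indChar H W.character := by
    ext g
    exact coind_char_aux H σ g
  refine ⟨U, ?_, hchar⟩
  rw [FDRep.simple_iff_end_is_rank_one]
  have hend : ∀ i : U ⟶ U, ∃ c : ℂ, c • 𝟙 U = i := by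
    intro i
    let L : Representation.coindV H.subtype σ →ₗ[ℂ] Representation.coindV H.subtype σ :=
      i.hom.hom.hom
    obtain ⟨c, hc⟩ := coind_end_aux N hN H hNH σ hA (schur_aux W) L (by
      intro g f
      have h := i.comm g
      exact LinearMap.congr_fun (congrArg (fun k => k.hom.hom) h) f)
    refine ⟨c, ?_⟩
    ext v y
    exact congrFun (congrArg Subtype.val (hc v).symm) y
  refine (finrank_eq_one_iff_of_nonzero' (𝟙 U) ?_).2 hend
  intro h0
  -- otherwise `U` would be zero, but it has positive dimension
  have hz : ∀ v : Representation.coindV H.subtype σ, v = 0 := by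
    intro v
    have : ((𝟙 U : U ⟶ U).hom.hom.hom : U →ₗ[ℂ] U) v = 0 := by rw [h0]; rfl
    exact this
  have h1 : indChar H W.character 1 = 0 := by
    rw [← hchar, FDRep.char_one]
    have : Subsingleton U := ⟨fun a b => (hz a).trans (hz b).symm⟩
    rw [Module.finrank_zero_of_subsingleton, Nat.cast_zero]
  have hWne : W.character 1 ≠ 0 := by
    rw [FDRep.char_one, Nat.cast_ne_zero]
    intro h
    have : Subsingleton W := Module.finrank_zero_iff.1 h
    apply hf0
    apply Representation.IntertwiningMap.ext
    ext x
    exact Subsingleton.elim (α := W) _ _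
  have hH : (Nat.card H : ℂ) ≠ 0 := NeZero.ne _
  have hG : (Fintype.card G : ℂ) ≠ 0 := NeZero.ne _
  have h2 : ∀ x : G, (if h : x⁻¹ * 1 * x ∈ H then W.character ⟨x⁻¹ * 1 * x, h⟩ else 0) =
      W.character 1 := by
    intro x
    have : x⁻¹ * 1 * x = 1 := by simp
    rw [dif_pos (by rw [this]; exact H.one_mem)]
    congr 1
    ext
    simp
  rw [indChar] at h1
  simp only [h2, Finset.sum_const, Finset.card_univ, nsmul_eq_mul] at h1
  exact mul_ne_zero (inv_ne_zero hH) (mul_ne_zero hG hWne) h1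
end
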